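/- Let a > 0 be a real number and define f : ℝ → ℝ by f(x) = (2^x − 1)² / ((2^x − 1)² + a²). Then for every x ≥ log₂(a + 1), the second derivative of f at x is strictly negative: (deriv (deriv f)) x < 0. -/

import Mathlib

/-!
Put `g t = t² / (t² + c)` with `c = a²`, so that `f x = g (2 ^ x - 1)`. As `u = 2 ^ x` satisfies
`u' = u log 2`, the chain rule gives `f'' = (log 2)² u (g' t + u g'' t)` at `t = u - 1`. Both `g'`
and `g''` are explicit, and the sign of the bracket is that of `2 t (c - t²) + (c - 3 t²)`. When
`t ≥ a` we have `c ≤ t²`, so the first summand is nonpositive and the second is negative.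
-/

section RationalFunction

variable {𝕜 : Type*} [NontriviallyNormedField 𝕜] {c t : 𝕜}

theorem hasDerivAt_sq_div_sq_add_const (h : t ^ 2 + c ≠ 0) :
    HasDerivAt (fun y ↦ y ^ 2 / (y ^ 2 + c)) (2 * c * t / (t ^ 2 + c) ^ 2) t := by
  have hsq : HasDerivAt (fun y : 𝕜 ↦ y ^ 2) (2 * t) t := by simpa using hasDerivAt_pow 2 t
  refine (hsq.fun_div (hsq.add_const c) h).congr_deriv ?_
  ring

theorem hasDerivAt_mul_div_sq_add_const_sq (h : t ^ 2 + c ≠ 0) :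
    HasDerivAt (fun y ↦ 2 * c * y / (y ^ 2 + c) ^ 2)
      (2 * c * (c - 3 * t ^ 2) / (t ^ 2 + c) ^ 3) t := by
  have hnum : HasDerivAt (fun y ↦ 2 * c * y) (2 * c) t := by
    simpa using (hasDerivAt_id t).const_mul (2 * c)
  have hden : HasDerivAt (fun y ↦ (y ^ 2 + c) ^ 2) (2 * (t ^ 2 + c) * (2 * t)) t := by
    simpa using ((hasDerivAt_pow 2 t).add_const c).fun_pow 2
  refine (hnum.fun_div hden (pow_ne_zero 2 h)).congr_deriv ?_
  field_simp
  ring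

end RationalFunction

section ExponentialSubstitution

variable {b s x : ℝ}

theorem hasDerivAt_comp_const_rpow_sub {g : ℝ → ℝ} {g' : ℝ} (hb : 0 < b)
    (hg : HasDerivAt g g' (b ^ x - s)) :
    HasDerivAt (fun y : ℝ ↦ g (b ^ y - s)) (Real.log b * (b ^ x * g')) x := by
  have hrpow : HasDerivAt (fun y : ℝ ↦ b ^ y - s) (b ^ x * Real.log b) x :=
    (Real.hasStrictDerivAt_const_rpow hb x).hasDerivAt.sub_const s
  refine (hg.comp x hrpow).congr_deriv ?_
  ring

theorem deriv_deriv_comp_const_rpow_sub {g g' : ℝ → ℝ} {g'' : ℝ} (hb : 0 < b)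
    (hg : ∀ t, HasDerivAt g (g' t) t) (hg' : HasDerivAt g' g'' (b ^ x - s)) :
    deriv (deriv fun y : ℝ ↦ g (b ^ y - s)) x =
      Real.log b ^ 2 * b ^ x * (g' (b ^ x - s) + b ^ x * g'') := by
  have hfirst : (deriv fun y : ℝ ↦ g (b ^ y - s)) =
      fun y ↦ Real.log b * (b ^ y * g' (b ^ y - s)) :=
    funext fun y ↦ (hasDerivAt_comp_const_rpow_sub hb (hg _)).deriv
  have hrpow : HasDerivAt (fun y : ℝ ↦ b ^ y) (b ^ x * Real.log b) x :=
    (Real.hasStrictDerivAt_const_rpow hb x).hasDerivAt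
  rw [hfirst, ((hrpow.fun_mul (hasDerivAt_comp_const_rpow_sub hb hg')).const_mul _).deriv]
  ring

theorem deriv_deriv_sq_div_sq_add_comp_const_rpow_sub {c : ℝ} (hb : 0 < b) (hc : 0 < c) :
    deriv (deriv fun y : ℝ ↦ (b ^ y - s) ^ 2 / ((b ^ y - s) ^ 2 + c)) x =
      2 * c * Real.log b ^ 2 * b ^ x *
        (2 * (b ^ x - s) * (c - (b ^ x - s) ^ 2) + s * (c - 3 * (b ^ x - s) ^ 2)) /
        ((b ^ x - s) ^ 2 + c) ^ 3 := by
  have hden (t : ℝ) : t ^ 2 + c ≠ 0 := by positivity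
  rw [deriv_deriv_comp_const_rpow_sub hb (fun t ↦ hasDerivAt_sq_div_sq_add_const (hden t))
    (hasDerivAt_mul_div_sq_add_const_sq (hden _))]
  have hden_x := hden (b ^ x - s)
  field_simp
  ring

end ExponentialSubstitution

theorem two_mul_mul_sub_sq_add_mul_sub_neg {R : Type*} [CommRing R] [LinearOrder R]
    [IsStrictOrderedRing R] {c s t : R} (hs : 0 < s) (ht : 0 < t) (hct : c ≤ t ^ 2) :
    2 * t * (c - t ^ 2) + s * (c - 3 * t ^ 2) < 0 := by
  have hcubic : 2 * t * (c - t ^ 2) ≤ 0 :=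
    mul_nonpos_of_nonneg_of_nonpos (by positivity) (sub_nonpos.2 hct)
  have hquadratic : s * (c - 3 * t ^ 2) < 0 :=
    mul_neg_of_pos_of_neg hs (by linarith [pow_pos ht 2])
  exact add_neg_of_nonpos_of_neg hcubic hquadratic

theorem stmt_1_general {a b s : ℝ} (ha : 0 < a) (hb : 0 < b) (hb₁ : b ≠ 1) (hs : 0 < s)
    {f : ℝ → ℝ} (hf : ∀ x, f x = (b ^ x - s) ^ 2 / ((b ^ x - s) ^ 2 + a ^ 2))
    {x : ℝ} (hx : a + s ≤ b ^ x) : deriv (deriv f) x < 0 := by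
  have hat : a ≤ b ^ x - s := le_sub_iff_add_le.2 hx
  have hlog : Real.log b ≠ 0 := Real.log_ne_zero_of_pos_of_ne_one hb hb₁
  have hsign := two_mul_mul_sub_sq_add_mul_sub_neg hs (ha.trans_le hat)
    (pow_le_pow_left₀ ha.le hat 2)
  rw [funext hf, deriv_deriv_sq_div_sq_add_comp_const_rpow_sub hb (pow_pos ha 2)]
  exact div_neg_of_neg_of_pos (mul_neg_of_pos_of_neg (by positivity) hsign) (by positivity)

/-- For `a > 0` and `f(x) = (2^x − 1)² / ((2^x − 1)² + a²)`, the second derivative of `f`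
is strictly negative at every `x ≥ log₂(a + 1)`. -/
theorem stmt_1 (a : ℝ) (ha : 0 < a)
    (f : ℝ → ℝ)
    (hf : ∀ x, f x = ((2 : ℝ) ^ x - 1) ^ 2 / (((2 : ℝ) ^ x - 1) ^ 2 + a ^ 2)) :
    ∀ x, Real.logb 2 (a + 1) ≤ x → deriv (deriv f) x < 0 := fun _ hx ↦
  stmt_1_general ha two_pos (by norm_num) one_pos hf
    ((Real.logb_le_iff_le_rpow one_lt_two (by positivity)).1 hx)
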